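/- Assume moreover that ω : ℝᵈ → ℝᵈ is continuous. Then the Melnikov potential 𝓜̃ is continuous on ℝⁿ × ℝᵈ × 𝕋ᵈ × ℝ (jointly in all of its arguments). -/

import Mathlib

/-!
The integrand is jointly continuous in `(τ, I, φ, t)` for each fixed `σ`, and by the Lipschitz
condition together with the decay of the homoclinic orbits it is bounded by
`K * ∑ i, C0 * exp (-lam * |τ i + σ|)`. For `τ` within distance `1` of a fixed `τ₀`, the inequality
`|τ i + σ| ≥ |σ| - (|τ₀ i| + 1)` turns this into a bound by a constant multiple of
`exp (-lam * |σ|)`, which is integrable and independent of the parameters. Dominated convergence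
then gives continuity at every point.
-/

open MeasureTheory

/-- The Melnikov potential. -/
noncomputable def melnikovPotential {n d : ℕ}
    (p0 : Fin n → ℝ → ℝ) (q0 : Fin n → ℝ → AddCircle (1:ℝ))
    (h : (Fin n → ℝ) → (Fin n → AddCircle (1:ℝ)) → (Fin d → ℝ) →
      (Fin d → AddCircle (1:ℝ)) → ℝ → ℝ)
    (ω : (Fin d → ℝ) → Fin d → ℝ)
    (τ : Fin n → ℝ) (I : Fin d → ℝ) (φ : Fin d → AddCircle (1:ℝ)) (t : ℝ) : ℝ :=
  -∫ σ : ℝ,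
    (h (fun i => p0 i (τ i + σ)) (fun i => q0 i (τ i + σ)) I
        (fun j => φ j + ((σ * ω I j : ℝ) : AddCircle (1:ℝ))) (t + σ)
      - h 0 0 I (fun j => φ j + ((σ * ω I j : ℝ) : AddCircle (1:ℝ))) (t + σ))

/-- Integrability of the two-sided exponential, which is the dominating function up to a constant. -/
lemma integrable_exp_neg_mul_abs {lam : ℝ} (hlam : 0 < lam) :
    Integrable fun σ : ℝ => Real.exp (-lam * |σ|) := by
  have h1 : IntegrableOn (fun σ : ℝ => Real.exp (-lam * |σ|)) (Set.Ioi 0) :=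
    (integrableOn_exp_mul_Ioi (neg_lt_zero.mpr hlam) 0).congr_fun
      (fun σ hσ => by simp only [abs_of_pos (Set.mem_Ioi.mp hσ)]) measurableSet_Ioi
  have h2 : IntegrableOn (fun σ : ℝ => Real.exp (-lam * |σ|)) (Set.Iic 0) :=
    (integrableOn_exp_mul_Iic hlam 0).congr_fun
      (fun σ hσ => by simp only [abs_of_nonpos (Set.mem_Iic.mp hσ), neg_mul_neg])
      measurableSet_Iic
  rw [← integrableOn_univ, ← Set.Iic_union_Ioi (a := (0 : ℝ))]
  exact h2.union h1

/-- if moreover the frequency map `ω` is continuous, then the Melnikov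
potential is jointly continuous in all of its arguments on `ℝⁿ × ℝᵈ × 𝕋ᵈ × ℝ`. -/
theorem melnikovPotential_continuous
    {n d : ℕ} (hn : 1 ≤ n) (hd : 1 ≤ d)
    (lam C0 K : ℝ) (hlam : 0 < lam) (hC0 : 0 < C0) (hK : 0 < K)
    (p0 : Fin n → ℝ → ℝ) (q0 : Fin n → ℝ → AddCircle (1:ℝ))
    (hp0 : ∀ i, Continuous (p0 i)) (hq0 : ∀ i, Continuous (q0 i))
    (hdecay : ∀ i s, |p0 i s| + dist (q0 i s) 0 ≤ C0 * Real.exp (-lam * |s|))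
    (h : (Fin n → ℝ) → (Fin n → AddCircle (1:ℝ)) → (Fin d → ℝ) →
      (Fin d → AddCircle (1:ℝ)) → ℝ → ℝ)
    (hcont : Continuous fun x : (Fin n → ℝ) × (Fin n → AddCircle (1:ℝ)) × (Fin d → ℝ) ×
        (Fin d → AddCircle (1:ℝ)) × ℝ => h x.1 x.2.1 x.2.2.1 x.2.2.2.1 x.2.2.2.2)
    (hLip : ∀ p q p' q' I φ t, |h p q I φ t - h p' q' I φ t| ≤
      K * ((∑ i, |p i - p' i|) + ∑ i, dist (q i) (q' i)))
    (ω : (Fin d → ℝ) → Fin d → ℝ)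
    (hω : Continuous ω) :
    Continuous fun x : (Fin n → ℝ) × (Fin d → ℝ) × (Fin d → AddCircle (1:ℝ)) × ℝ =>
      melnikovPotential p0 q0 h ω x.1 x.2.1 x.2.2.1 x.2.2.2 := by
  unfold melnikovPotential
  refine Continuous.neg ?_
  set F : ((Fin n → ℝ) × (Fin d → ℝ) × (Fin d → AddCircle (1:ℝ)) × ℝ) → ℝ → ℝ := fun x σ =>
    h (fun i => p0 i (x.1 i + σ)) (fun i => q0 i (x.1 i + σ)) x.2.1
        (fun j => x.2.2.1 j + ((σ * ω x.2.1 j : ℝ) : AddCircle (1:ℝ))) (x.2.2.2 + σ)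
      - h 0 0 x.2.1 (fun j => x.2.2.1 j + ((σ * ω x.2.1 j : ℝ) : AddCircle (1:ℝ)))
        (x.2.2.2 + σ) with hF
  have hFcont : Continuous (Function.uncurry F) := by
    have hpc : Continuous fun y : ((Fin n → ℝ) × (Fin d → ℝ) × (Fin d → AddCircle (1:ℝ)) × ℝ) × ℝ =>
        (fun i => p0 i (y.1.1 i + y.2)) :=
      continuous_pi fun i => (hp0 i).comp (by fun_prop)
    have hqc : Continuous fun y : ((Fin n → ℝ) × (Fin d → ℝ) × (Fin d → AddCircle (1:ℝ)) × ℝ) × ℝ =>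
        (fun i => q0 i (y.1.1 i + y.2)) :=
      continuous_pi fun i => (hq0 i).comp (by fun_prop)
    have hφc : Continuous fun y : ((Fin n → ℝ) × (Fin d → ℝ) × (Fin d → AddCircle (1:ℝ)) × ℝ) × ℝ =>
        (fun j => y.1.2.2.1 j + ((y.2 * ω y.1.2.1 j : ℝ) : AddCircle (1:ℝ))) :=
      continuous_pi fun j => Continuous.add (by fun_prop)
        ((AddCircle.continuous_mk' (1:ℝ)).comp (by fun_prop))
    have hIc : Continuous fun y : ((Fin n → ℝ) × (Fin d → ℝ) × (Fin d → AddCircle (1:ℝ)) × ℝ) × ℝ =>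
        y.1.2.1 := by fun_prop
    have htc : Continuous fun y : ((Fin n → ℝ) × (Fin d → ℝ) × (Fin d → AddCircle (1:ℝ)) × ℝ) × ℝ =>
        y.1.2.2.2 + y.2 := by fun_prop
    have h1 := hcont.comp (hpc.prodMk (hqc.prodMk (hIc.prodMk (hφc.prodMk htc))))
    have h2 := hcont.comp ((continuous_const (y := (0 : Fin n → ℝ))).prodMk
      ((continuous_const (y := (0 : Fin n → AddCircle (1:ℝ)))).prodMk
        (hIc.prodMk (hφc.prodMk htc))))
    exact h1.sub h2
  have hFbound : ∀ x σ, |F x σ| ≤ K * ∑ i, C0 * Real.exp (-lam * |x.1 i + σ|) := by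
    intro x σ
    refine (hLip _ _ _ _ _ _ _).trans (mul_le_mul_of_nonneg_left ?_ hK.le)
    rw [← Finset.sum_add_distrib]
    refine Finset.sum_le_sum fun i _ => ?_
    simpa using hdecay i (x.1 i + σ)
  rw [continuous_iff_continuousAt]
  intro x₀
  refine continuousAt_of_dominated (F := F)
    (bound := fun σ => K * ∑ i, C0 * (Real.exp (lam * (|x₀.1 i| + 1)) * Real.exp (-lam * |σ|)))
    ?_ ?_ ?_ ?_
  · exact Filter.Eventually.of_forall fun x =>
      (hFcont.comp (Continuous.prodMk_right x)).aestronglyMeasurable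
  · filter_upwards [Metric.ball_mem_nhds x₀ one_pos] with x hx
    refine Filter.Eventually.of_forall fun σ => (hFbound x σ).trans ?_
    refine mul_le_mul_of_nonneg_left (Finset.sum_le_sum fun i _ => ?_) hK.le
    refine mul_le_mul_of_nonneg_left ?_ hC0.le
    rw [← Real.exp_add, Real.exp_le_exp]
    have hi : |x.1 i - x₀.1 i| < 1 := by
      rw [← Real.dist_eq]
      exact (dist_le_pi_dist x.1 x₀.1 i).trans_lt ((le_max_left _ _).trans_lt hx)
    have hσ : |σ| ≤ |x.1 i + σ| + (|x₀.1 i| + 1) := by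
      have e : σ = (x.1 i + σ) - (x₀.1 i + (x.1 i - x₀.1 i)) := by ring
      calc |σ| = |(x.1 i + σ) - (x₀.1 i + (x.1 i - x₀.1 i))| := by rw [← e]
        _ ≤ |x.1 i + σ| + |x₀.1 i + (x.1 i - x₀.1 i)| := abs_sub _ _
        _ ≤ |x.1 i + σ| + (|x₀.1 i| + |x.1 i - x₀.1 i|) := by gcongr; exact abs_add_le _ _
        _ ≤ _ := by gcongr
    nlinarith
  · exact (integrable_finsetSum _ fun i _ =>
      ((integrable_exp_neg_mul_abs hlam).const_mul _).const_mul _).const_mul _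
  · exact Filter.Eventually.of_forall fun σ =>
      (hFcont.comp (Continuous.prodMk_left σ)).continuousAt
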